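/- Let F be a Minkowski norm on a finite-dimensional real vector space E. Then the uniform smoothness and uniform convexity constants admit the dual expressions: sup_{v,w ∈ E \ {0}} g_v(w,w)/F(w)² = sup_{α,β ∈ E* \ {0}} F*(β)²/g*_α(β,β), and sup_{v,w ∈ E \ {0}} F(w)²/g_v(w,w) = sup_{α,β ∈ E* \ {0}} g*_α(β,β)/F*(β)². -/

import Mathlib

/-!
Let `ℓ(v) = g_v(v, ·)` be the Legendre transform, half the differential of `F²`. Positive
definiteness of `g` makes `F²` convex along segments avoiding the origin, which with Euler's
identity `ℓ(v)(v) = F(v)²` gives the fundamental inequality `ℓ(v)(w) ≤ F(v) F(w)`, hence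
`F*(ℓ(v)) = F(v)`. A compactness argument shows that `ℓ` maps `E \ {0}` onto `E* \ {0}`.
The derivative of `ℓ` at `v` is `w ↦ g_v(w, ·)`, which is invertible, so by the inverse function
theorem `(F*)²` is twice differentiable near `ℓ(v)` and `g*_{ℓ(v)}` is the inverse of `g_v`:
`g*_{ℓ(v)}(β, β) = g_v(w, w)` whenever `β = g_v(w, ·)` (`fundamentalTensor_dual`).

Both identities then hold already for the inner suprema, at fixed `v` and `α = ℓ(v)`:
* if `β = g_v(w, ·)`, then `g_v(w, w) = β(w) ≤ F*(β) F(w)`, so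
  `g_v(w, w)² ≤ F*(β)² F(w)²` (`tensor_sq_le`);
* if `β = ℓ(u)`, then by Cauchy–Schwarz `F(u)⁴ = β(u)² ≤ g_v(u, u) g*_α(β, β)`
  (`pow_four_le`), where `F(u) = F*(β)`.

Each inequality, divided in two ways, compares a term of one supremum with a term of the other,
and `v`, `α`, `β`, `w` are arbitrary because `ℓ` and `w ↦ g_v(w, ·)` are onto.
-/

/-- The fundamental tensor of `F` at `v`: `g_v(w₁, w₂) := (1/2)·D²(F²)(v)[w₁, w₂]`,
given by the second Fréchet derivative of `F²` at `v`. -/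
noncomputable def fundamentalTensor {E : Type*} [NormedAddCommGroup E] [NormedSpace ℝ E]
    (F : E → ℝ) (v w₁ w₂ : E) : ℝ :=
  (1 / 2 : ℝ) * iteratedFDeriv ℝ 2 (fun x => F x ^ 2) v ![w₁, w₂]

/-- A **Minkowski norm** on a real vector space `E`: `F ≥ 0`, positive away from `0`,
smooth on `E \ {0}`, positively `1`-homogeneous, and with positive definite
fundamental tensor `g_v` for every `v ≠ 0`. -/
structure IsMinkowskiNorm {E : Type*} [NormedAddCommGroup E] [NormedSpace ℝ E]
    (F : E → ℝ) : Prop where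
  nonneg : ∀ v : E, 0 ≤ F v
  pos : ∀ v : E, v ≠ 0 → 0 < F v
  smooth : ContDiffOn ℝ (⊤ : ℕ∞) F {(0 : E)}ᶜ
  homog : ∀ c : ℝ, 0 ≤ c → ∀ v : E, F (c • v) = c * F v
  posdef : ∀ v : E, v ≠ 0 → ∀ w : E, w ≠ 0 → 0 < fundamentalTensor F v w w

/-- The dual norm `F*(α) := sup {α(v) : F(v) ≤ 1}` on the dual space. -/
noncomputable def dualNorm {E : Type*} [NormedAddCommGroup E] [NormedSpace ℝ E]
    (F : E → ℝ) (α : E →L[ℝ] ℝ) : ℝ :=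
  sSup ((fun v => α v) '' {v : E | F v ≤ 1})

/-- The Legendre transform `v ↦ g_v(v, ·)`, encoded as half the differential of `F²` at `v`. -/
noncomputable def legendre {E : Type*} [NormedAddCommGroup E] [NormedSpace ℝ E]
    (F : E → ℝ) (v : E) : E →L[ℝ] ℝ :=
  (1 / 2 : ℝ) • fderiv ℝ (fun x => F x ^ 2) v

lemma hasFDerivAt_of_eventuallyEq_clm_comp {D E W : Type*} [NormedAddCommGroup D]
    [NormedSpace ℝ D] [NormedAddCommGroup E] [NormedSpace ℝ E] [NormedAddCommGroup W]
    [NormedSpace ℝ W] (T : E →L[ℝ] W) {f : D → W} {ψ : D → E} {ψ' : D →L[ℝ] E} {x : D}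
    (hψ : HasFDerivAt ψ ψ' x) (hf : f =ᶠ[nhds x] fun γ => T (ψ γ)) :
    HasFDerivAt f (T.comp ψ') x :=
  (T.hasFDerivAt.comp x hψ).congr_of_eventuallyEq hf

namespace IsMinkowskiNorm

section Normed

variable {E : Type*} [NormedAddCommGroup E] [NormedSpace ℝ E] {F : E → ℝ}

/-! ### Smoothness of `F²` and Cauchy–Schwarz for the fundamental tensor -/

lemma map_zero (hF : IsMinkowskiNorm F) : F 0 = 0 := by
  simpa using hF.homog 0 le_rfl 0

lemma contDiffAt_sq (hF : IsMinkowskiNorm F) {v : E} (hv : v ≠ 0) :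
    ContDiffAt ℝ (⊤ : ℕ∞) (fun x => F x ^ 2) v :=
  (hF.smooth.contDiffAt (isOpen_compl_singleton.mem_nhds hv)).pow 2

lemma contDiffAt_legendre (hF : IsMinkowskiNorm F) {v : E} (hv : v ≠ 0) :
    ContDiffAt ℝ 1 (legendre F) v := by
  have h : ContDiffAt ℝ 1 (fderiv ℝ (fun x => F x ^ 2)) v :=
    (hF.contDiffAt_sq hv).fderiv_right (by norm_cast)
  exact h.const_smul (1 / 2 : ℝ)

lemma hasFDerivAt_sq (hF : IsMinkowskiNorm F) {v : E} (hv : v ≠ 0) :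
    HasFDerivAt (fun x => F x ^ 2) ((2 : ℝ) • legendre F v) v := by
  have h := ((hF.contDiffAt_sq hv).differentiableAt (by simp)).hasFDerivAt
  have h2 : (2 : ℝ) • legendre F v = fderiv ℝ (fun x => F x ^ 2) v := by
    rw [legendre, smul_smul]
    norm_num
  rwa [h2]

lemma hasFDerivAt_legendre (hF : IsMinkowskiNorm F) {v : E} (hv : v ≠ 0) :
    HasFDerivAt (legendre F) (fderiv ℝ (legendre F) v) v :=
  ((hF.contDiffAt_legendre hv).differentiableAt (by simp)).hasFDerivAt

lemma fundamentalTensor_eq (hF : IsMinkowskiNorm F) {v : E} (hv : v ≠ 0) (w₁ w₂ : E) :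
    fundamentalTensor F v w₁ w₂ = fderiv ℝ (legendre F) v w₁ w₂ := by
  have h : ContDiffAt ℝ 1 (fderiv ℝ (fun x => F x ^ 2)) v :=
    (hF.contDiffAt_sq hv).fderiv_right (by norm_cast)
  have h2 : fderiv ℝ (legendre F) v
      = (1 / 2 : ℝ) • fderiv ℝ (fderiv ℝ (fun x => F x ^ 2)) v := by
    have := ((h.differentiableAt (by simp)).hasFDerivAt).const_smul (1 / 2 : ℝ)
    exact this.fderiv
  rw [fundamentalTensor, iteratedFDeriv_two_apply, h2]
  simp

lemma fundamentalTensor_symm (hF : IsMinkowskiNorm F) {v : E} (hv : v ≠ 0) (w₁ w₂ : E) :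
    fundamentalTensor F v w₁ w₂ = fundamentalTensor F v w₂ w₁ := by
  have h := (hF.contDiffAt_sq hv).isSymmSndFDerivAt
    (by simp [minSmoothness_of_isRCLikeNormedField]; norm_cast)
  simp only [fundamentalTensor, iteratedFDeriv_two_apply]
  simpa using h w₁ w₂

lemma fundamentalTensor_self_nonneg (hF : IsMinkowskiNorm F) {v : E} (hv : v ≠ 0) (w : E) :
    0 ≤ fundamentalTensor F v w w := by
  rcases eq_or_ne w 0 with rfl | hw
  · rw [hF.fundamentalTensor_eq hv]; simp
  · exact (hF.posdef v hv w hw).le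

lemma cauchySchwarz (hF : IsMinkowskiNorm F) {v : E} (hv : v ≠ 0) (a b : E) :
    fundamentalTensor F v a b ^ 2
      ≤ fundamentalTensor F v a a * fundamentalTensor F v b b := by
  have h : ∀ t : ℝ, 0 ≤ fundamentalTensor F v b b * (t * t)
      + (2 * fundamentalTensor F v a b) * t + fundamentalTensor F v a a := by
    intro t
    have h1 := hF.fundamentalTensor_self_nonneg hv (a + t • b)
    have hs := hF.fundamentalTensor_symm hv b a
    simp only [hF.fundamentalTensor_eq hv, map_add, map_smul, _root_.add_apply,
      _root_.smul_apply, smul_eq_mul] at h1 hs ⊢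
    rw [hs] at h1
    linarith
  have := discrim_le_zero h
  rw [discrim] at this
  nlinarith

/-! ### Euler's identity and the fundamental inequality -/

/-- Euler's identity for the `2`-homogeneous function `F²`. -/
lemma legendre_self (hF : IsMinkowskiNorm F) {v : E} (hv : v ≠ 0) :
    legendre F v v = F v ^ 2 := by
  have h1 : HasDerivAt (fun t : ℝ => t • v) v 1 := by
    simpa using (hasDerivAt_id (1 : ℝ)).smul_const v
  have h2 : HasDerivAt (fun t : ℝ => F (t • v) ^ 2) (((2 : ℝ) • legendre F v) v) 1 :=
    HasFDerivAt.comp_hasDerivAt (f := fun t : ℝ => t • v) (l := fun x => F x ^ 2) 1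
      (by simpa using hF.hasFDerivAt_sq hv) h1
  have h3 : HasDerivAt (fun t : ℝ => t ^ 2 * F v ^ 2) (2 * F v ^ 2) 1 := by
    simpa using (hasDerivAt_pow 2 (1 : ℝ)).mul_const (F v ^ 2)
  have h4 : (fun t : ℝ => F (t • v) ^ 2) =ᶠ[nhds 1] fun t => t ^ 2 * F v ^ 2 := by
    filter_upwards [lt_mem_nhds (zero_lt_one' ℝ)] with t ht
    rw [hF.homog t ht.le, mul_pow]
  have h5 := h2.unique (h3.congr_of_eventuallyEq h4)
  simp only [_root_.smul_apply, smul_eq_mul] at h5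
  linarith

/-- `F²` lies above its tangent at `v` at every point `w` joined to `v` by a segment avoiding
the origin, where `F²` need not be twice differentiable. -/
lemma tangent_le (hF : IsMinkowskiNorm F) {v w : E}
    (hseg : ∀ t ∈ Set.Icc (0 : ℝ) 1, v + t • (w - v) ≠ 0) :
    F v ^ 2 + 2 * legendre F v (w - v) ≤ F w ^ 2 := by
  have hline : ∀ t : ℝ, HasDerivAt (fun t : ℝ => v + t • (w - v)) (w - v) t := fun t => by
    simpa using ((hasDerivAt_id t).smul_const (w - v)).const_add v
  have h1 : ∀ t ∈ Set.Icc (0 : ℝ) 1, HasDerivAt (fun t : ℝ => F (v + t • (w - v)) ^ 2)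
      (2 * legendre F (v + t • (w - v)) (w - v)) t := fun t ht => by
    exact HasFDerivAt.comp_hasDerivAt (f := fun t : ℝ => v + t • (w - v))
      (l := fun x => F x ^ 2) t (hF.hasFDerivAt_sq (hseg t ht)) (hline t)
  have h2 : ∀ t ∈ Set.Icc (0 : ℝ) 1,
      HasDerivAt (fun t : ℝ => legendre F (v + t • (w - v)) (w - v))
      (fundamentalTensor F (v + t • (w - v)) (w - v) (w - v)) t := fun t ht => by
    have := HasFDerivAt.comp_hasDerivAt (f := fun t : ℝ => v + t • (w - v))
      (l := legendre F) t (hF.hasFDerivAt_legendre (hseg t ht)) (hline t)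
    rw [hF.fundamentalTensor_eq (hseg t ht)]
    simpa using this.clm_apply (hasDerivAt_const t (w - v))
  obtain ⟨c, hc, hc'⟩ := exists_hasDerivAt_eq_slope _ _ zero_lt_one
    (fun t ht => (h1 t ht).continuousAt.continuousWithinAt)
    (fun t ht => h1 t (Set.Ioo_subset_Icc_self ht))
  have hsub : Set.Icc 0 c ⊆ Set.Icc (0 : ℝ) 1 := Set.Icc_subset_Icc_right hc.2.le
  obtain ⟨d, hd, hd'⟩ := exists_hasDerivAt_eq_slope _ _ hc.1
    (fun t ht => (h2 t (hsub ht)).continuousAt.continuousWithinAt)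
    (fun t ht => h2 t (hsub (Set.Ioo_subset_Icc_self ht)))
  have hpos := hF.fundamentalTensor_self_nonneg
    (hseg d (hsub (Set.Ioo_subset_Icc_self hd))) (w - v)
  rw [hd', le_div_iff₀ (by linarith [hc.1])] at hpos
  simp at hpos hc'
  rw [map_sub]
  linarith

/-- The fundamental inequality `g_v(v, w) ≤ F(v) F(w)`. -/
lemma legendre_le (hF : IsMinkowskiNorm F) {v : E} (hv : v ≠ 0) (w : E) :
    legendre F v w ≤ F v * F w := by
  have key : ∀ w, F w = F v → legendre F v w ≤ F v ^ 2 := by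
    intro w hw
    by_cases hseg : ∀ t ∈ Set.Icc (0 : ℝ) 1, v + t • (w - v) ≠ 0
    · have := hF.tangent_le hseg
      rw [map_sub, hF.legendre_self hv, hw] at this
      linarith
    · -- The segment meets the origin only when `w` is a nonpositive multiple of `v`.
      push Not at hseg
      obtain ⟨t, ht, h0⟩ := hseg
      have h1 := congrArg (legendre F v) h0
      simp only [map_add, map_smul, map_sub, hF.legendre_self hv, smul_eq_mul,
        _root_.map_zero] at h1
      have ht0 : 0 < t := by
        refine lt_of_le_of_ne ht.1 ?_
        rintro rfl
        simp at h0
        exact hv h0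
      have h2 : 0 ≤ (1 - t) * F v ^ 2 := mul_nonneg (by linarith [ht.2]) (sq_nonneg _)
      have h3 : legendre F v w ≤ 0 := by
        by_contra h
        push Not at h
        nlinarith [mul_pos ht0 h]
      exact h3.trans (sq_nonneg _)
  rcases eq_or_ne w 0 with rfl | hw
  · simp [hF.map_zero]
  have hv' := hF.pos v hv
  have hw' := hF.pos w hw
  have := key ((F v / F w) • w) (by
    rw [hF.homog _ (by positivity)]; field_simp)
  rw [map_smul, smul_eq_mul, div_mul_eq_mul_div, div_le_iff₀ hw'] at this
  nlinarith

lemma dualNorm_legendre (hF : IsMinkowskiNorm F) {v : E} (hv : v ≠ 0) :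
    dualNorm F (legendre F v) = F v := by
  have hv' := hF.pos v hv
  refine IsGreatest.csSup_eq ⟨⟨(F v)⁻¹ • v, ?_, ?_⟩, ?_⟩
  · show F _ ≤ 1
    rw [hF.homog _ (by positivity), inv_mul_cancel₀ hv'.ne']
  · simp only [map_smul, hF.legendre_self hv, smul_eq_mul]
    field_simp
  · rintro _ ⟨w, hw, rfl⟩
    refine (hF.legendre_le hv w).trans ?_
    exact mul_le_of_le_one_right hv'.le hw

lemma legendre_ne_zero (hF : IsMinkowskiNorm F) {v : E} (hv : v ≠ 0) : legendre F v ≠ 0 := by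
  intro h
  have := hF.legendre_self hv
  have h2 := hF.pos v hv
  rw [h, zero_apply] at this
  exact (pow_pos h2 2).ne this

/-! ### Covectors in the image of the Legendre transform -/

/-- Cauchy–Schwarz for `g_v`, applied to the covector `g_u(u, ·) = g_v(w, ·)` at `u`. -/
lemma pow_four_le (hF : IsMinkowskiNorm F) {v u w : E} (hv : v ≠ 0) (hu : u ≠ 0)
    (h : fderiv ℝ (legendre F) v w = legendre F u) :
    F u ^ 2 * F u ^ 2 ≤ fundamentalTensor F v u u * fundamentalTensor F v w w := by
  have h1 := hF.cauchySchwarz hv w u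
  rw [hF.fundamentalTensor_eq hv w u, h, hF.legendre_self hu] at h1
  linarith

/-- The differential of `(F*)²` is twice the inverse Legendre transform `ψ`: locally `(F*)²` is
both `F² ∘ ψ` and `γ ↦ γ(ψ γ)`, and the chain and product rules give the same derivative only if
`γ(Dψ(γ) β) = β(ψ γ)`. -/
lemma fderiv_dualNorm_sq (hF : IsMinkowskiNorm F) {ψ : (E →L[ℝ] ℝ) → E} {γ : E →L[ℝ] ℝ}
    (hψ : ∀ᶠ δ in nhds γ, legendre F (ψ δ) = δ ∧ ψ δ ≠ 0 ∧ DifferentiableAt ℝ ψ δ) :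
    fderiv ℝ (fun δ => dualNorm F δ ^ 2) γ
      = (2 : ℝ) • ContinuousLinearMap.apply ℝ ℝ (ψ γ) := by
  have hsq : ∀ᶠ δ in nhds γ,
      dualNorm F δ ^ 2 = F (ψ δ) ^ 2 ∧ dualNorm F δ ^ 2 = δ (ψ δ) := by
    filter_upwards [hψ] with δ ⟨h1, h2, _⟩
    have h3 := hF.dualNorm_legendre h2
    have h4 := hF.legendre_self h2
    rw [h1] at h3 h4
    rw [h3, h4]
    exact ⟨rfl, rfl⟩
  obtain ⟨h1, h2, h3⟩ := hψ.self_of_nhds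
  have d1 : HasFDerivAt (fun δ => dualNorm F δ ^ 2)
      (((2 : ℝ) • legendre F (ψ γ)).comp (fderiv ℝ ψ γ)) γ :=
    (HasFDerivAt.comp (g := fun x => F x ^ 2) γ (hF.hasFDerivAt_sq h2)
      h3.hasFDerivAt).congr_of_eventuallyEq (hsq.mono fun _ h => h.1)
  have d2 := (HasFDerivAt.clm_apply (hasFDerivAt_id γ) h3.hasFDerivAt).congr_of_eventuallyEq
    (f₁ := fun δ => dualNorm F δ ^ 2) (hsq.mono fun _ h => h.2)
  have hu := d1.unique d2
  rw [d1.fderiv]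
  ext β
  have hβ := congrArg (fun L => L β) hu
  simp [h1] at hβ ⊢
  linarith

end Normed

section FiniteDimensional

variable {E : Type*} [NormedAddCommGroup E] [NormedSpace ℝ E] [FiniteDimensional ℝ E] {F : E → ℝ}

/-! ### Surjectivity of the Legendre transform -/

/-- A nonzero covector `β` is the Legendre transform of a suitable multiple of a maximiser of
`β / F` on the unit sphere of the ambient norm. -/
lemma legendre_surjective (hF : IsMinkowskiNorm F) {β : E →L[ℝ] ℝ} (hβ : β ≠ 0) :
    ∃ u : E, u ≠ 0 ∧ legendre F u = β := by
  obtain ⟨w₀, hw₀⟩ : ∃ w, 0 < β w := by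
    obtain ⟨w, hw⟩ := DFunLike.ne_iff.mp hβ
    rcases lt_or_gt_of_ne hw with h | h
    · exact ⟨-w, by simpa using h⟩
    · exact ⟨w, by simpa using h⟩
  have hw₀' : w₀ ≠ 0 := by rintro rfl; simp at hw₀
  have : Nontrivial E := ⟨w₀, 0, hw₀'⟩
  have hcont : ContinuousOn (fun x => β x / F x) (Metric.sphere (0 : E) 1) := by
    have hsub : Metric.sphere (0 : E) 1 ⊆ {0}ᶜ := fun x hx =>
      ne_zero_of_mem_unit_sphere (⟨x, hx⟩ : Metric.sphere (0 : E) 1)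
    exact β.continuous.continuousOn.div (hF.smooth.continuousOn.mono hsub)
      fun x hx => (hF.pos x (hsub hx)).ne'
  obtain ⟨x, hx, hmax⟩ := (isCompact_sphere (0 : E) 1).exists_isMaxOn
    (NormedSpace.sphere_nonempty.mpr zero_le_one) hcont
  have hx0 : x ≠ 0 := ne_zero_of_mem_unit_sphere (⟨x, hx⟩ : Metric.sphere (0 : E) 1)
  have hFx := hF.pos x hx0
  obtain ⟨l, hl⟩ : ∃ l, l = β x / F x := ⟨_, rfl⟩
  have hle : ∀ w, β w ≤ l * F w := by
    intro w
    rcases eq_or_ne w 0 with rfl | hw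
    · simp [hF.map_zero]
    have hn : 0 < ‖w‖ := norm_pos_iff.mpr hw
    have h1 : β (‖w‖⁻¹ • w) / F (‖w‖⁻¹ • w) ≤ β x / F x :=
      hmax (by simp [norm_smul, hn.ne'])
    rw [hF.homog _ (by positivity), map_smul, smul_eq_mul, ← hl,
      mul_div_mul_left _ _ (by positivity), div_le_iff₀ (hF.pos w hw)] at h1
    exact h1
  have hl0 : 0 < l := pos_of_mul_pos_left (hw₀.trans_le (hle w₀)) (hF.nonneg _)
  have hu : (l / F x) • x ≠ 0 := smul_ne_zero (by positivity) hx0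
  refine ⟨(l / F x) • x, hu, ?_⟩
  have hFu : F ((l / F x) • x) = l := by
    rw [hF.homog _ (by positivity)]; field_simp
  have hβu : β ((l / F x) • x) = l ^ 2 := by
    rw [map_smul, smul_eq_mul, div_mul_eq_mul_div, mul_div_assoc, ← hl, sq]
  -- By `β ≤ l F ≤ (F² + l²) / 2`, the chosen point minimises `F² - 2β`, so it is critical.
  have hmin : IsLocalMin (fun w => F w ^ 2 - 2 * β w) ((l / F x) • x) := by
    refine Filter.Eventually.of_forall fun w => ?_
    simp only [hFu, hβu]
    nlinarith [hle w, sq_nonneg (F w - l)]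
  have hd : HasFDerivAt (fun w => F w ^ 2 - 2 * β w)
      ((2 : ℝ) • legendre F ((l / F x) • x) - (2 : ℝ) • β) ((l / F x) • x) :=
    (hF.hasFDerivAt_sq hu).sub (β.hasFDerivAt.const_mul 2)
  have h0 := hmin.hasFDerivAt_eq_zero hd
  exact smul_right_injective _ (two_ne_zero' ℝ) (sub_eq_zero.mp h0)

lemma le_dualNorm_mul (hF : IsMinkowskiNorm F) {β : E →L[ℝ] ℝ} (hβ : β ≠ 0) (w : E) :
    β w ≤ dualNorm F β * F w := by
  obtain ⟨u, hu, rfl⟩ := hF.legendre_surjective hβ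
  rw [hF.dualNorm_legendre hu]
  exact hF.legendre_le hu w

lemma dualNorm_pos (hF : IsMinkowskiNorm F) {β : E →L[ℝ] ℝ} (hβ : β ≠ 0) :
    0 < dualNorm F β := by
  obtain ⟨u, hu, rfl⟩ := hF.legendre_surjective hβ
  rw [hF.dualNorm_legendre hu]
  exact hF.pos u hu

/-! ### Invertibility of the Legendre transform and the dual tensor -/

/-- The derivative of the Legendre transform at `v`, namely `w ↦ g_v(w, ·)`, is an isomorphism:
it is injective by positive definiteness, and the dimensions agree. -/
lemma exists_equiv (hF : IsMinkowskiNorm F) {v : E} (hv : v ≠ 0) :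
    ∃ A : E ≃L[ℝ] (E →L[ℝ] ℝ), (A : E →L[ℝ] (E →L[ℝ] ℝ)) = fderiv ℝ (legendre F) v := by
  have hinj : Function.Injective (fderiv ℝ (legendre F) v : E →ₗ[ℝ] (E →L[ℝ] ℝ)) := by
    rw [← LinearMap.ker_eq_bot, LinearMap.ker_eq_bot']
    intro w hw
    by_contra hw0
    have h := hF.posdef v hv w hw0
    rw [hF.fundamentalTensor_eq hv] at h
    have hw' : fderiv ℝ (legendre F) v w = 0 := hw
    simp [hw'] at h
  have hrank : Module.finrank ℝ E = Module.finrank ℝ (E →L[ℝ] ℝ) := by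
    rw [← (LinearMap.toContinuousLinearMap (𝕜 := ℝ) (E := E) (F' := ℝ)).finrank_eq]
    exact Subspace.dual_finrank_eq.symm
  refine ⟨(LinearEquiv.ofInjectiveOfFinrankEq _ hinj hrank).toContinuousLinearEquiv, ?_⟩
  ext w : 1
  rfl

/-- The inverse function theorem for the Legendre transform at `v`. -/
lemma exists_localInverse (hF : IsMinkowskiNorm F) {v : E} (hv : v ≠ 0)
    (A : E ≃L[ℝ] (E →L[ℝ] ℝ))
    (hA : (A : E →L[ℝ] (E →L[ℝ] ℝ)) = fderiv ℝ (legendre F) v) :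
    ∃ ψ : (E →L[ℝ] ℝ) → E,
      HasFDerivAt ψ (A.symm : (E →L[ℝ] ℝ) →L[ℝ] E) (legendre F v) ∧
      ∀ᶠ γ in nhds (legendre F v),
        legendre F (ψ γ) = γ ∧ ψ γ ≠ 0 ∧ DifferentiableAt ℝ ψ γ := by
  have hcd := hF.contDiffAt_legendre hv
  have hfd : HasFDerivAt (legendre F) (A : E →L[ℝ] (E →L[ℝ] ℝ)) v :=
    hA ▸ hF.hasFDerivAt_legendre hv
  have hstrict : HasStrictFDerivAt (legendre F) (A : E →L[ℝ] (E →L[ℝ] ℝ)) v :=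
    hcd.hasStrictFDerivAt' hfd (by simp)
  have hψcd : ContDiffAt ℝ 1 (hstrict.localInverse (legendre F) A v) (legendre F v) :=
    hcd.to_localInverse hfd (by simp)
  have hψv : hstrict.localInverse (legendre F) A v (legendre F v) = v :=
    hstrict.localInverse_apply_image
  have hne := hψcd.continuousAt.eventually_ne (by rwa [hψv])
  have hdiff := hψcd.eventually (by simp)
  refine ⟨hstrict.localInverse (legendre F) A v, hstrict.to_localInverse.hasFDerivAt, ?_⟩
  filter_upwards [hstrict.eventually_right_inverse, hne, hdiff] with γ h1 h2 h3
  exact ⟨h1, h2, h3.differentiableAt (by simp)⟩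

/-- Inverse-tensor identity: `g*` at the covector `g_v(v, ·)` is the inverse of `g_v`, evaluated
here on the covector `g_v(w, ·)`. -/
lemma fundamentalTensor_dual (hF : IsMinkowskiNorm F) {v : E} (hv : v ≠ 0) (w : E) :
    fundamentalTensor (fun γ : E →L[ℝ] ℝ => dualNorm F γ) (legendre F v)
      (fderiv ℝ (legendre F) v w) (fderiv ℝ (legendre F) v w)
      = fundamentalTensor F v w w := by
  obtain ⟨A, hA⟩ := hF.exists_equiv hv
  obtain ⟨ψ, hψd, hψ⟩ := hF.exists_localInverse hv A hA
  obtain ⟨T, hT⟩ : ∃ T : E →L[ℝ] ((E →L[ℝ] ℝ) →L[ℝ] ℝ),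
      ∀ x, T x = (2 : ℝ) • ContinuousLinearMap.apply ℝ ℝ x :=
    ⟨(2 : ℝ) • ContinuousLinearMap.apply ℝ ℝ, fun _ => rfl⟩
  have hgrad : fderiv ℝ (fun γ => dualNorm F γ ^ 2) =ᶠ[nhds (legendre F v)] fun γ => T (ψ γ) :=
    hψ.eventually_nhds.mono fun γ h => (hF.fderiv_dualNorm_sq h).trans (hT _).symm
  have hhess : HasFDerivAt (fderiv ℝ (fun γ => dualNorm F γ ^ 2))
      (T.comp (A.symm : (E →L[ℝ] ℝ) →L[ℝ] E)) (legendre F v) :=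
    hasFDerivAt_of_eventuallyEq_clm_comp (W := (E →L[ℝ] ℝ) →L[ℝ] ℝ) T hψd hgrad
  have h1 : fderiv ℝ (fderiv ℝ (fun γ => dualNorm F γ ^ 2)) (legendre F v) (A w) (A w)
      = 2 * A w w := by
    rw [hhess.fderiv]
    simp [hT]
  rw [hF.fundamentalTensor_eq hv, ← hA, fundamentalTensor, iteratedFDeriv_two_apply]
  simp [h1]

/-- Every nonzero covector has the form `g_v(w, ·)`. -/
lemma exists_fderiv_legendre_eq (hF : IsMinkowskiNorm F) {v : E} (hv : v ≠ 0)
    {β : E →L[ℝ] ℝ} (hβ : β ≠ 0) :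
    ∃ w : E, w ≠ 0 ∧ fderiv ℝ (legendre F) v w = β := by
  obtain ⟨A, hA⟩ := hF.exists_equiv hv
  refine ⟨A.symm β, by simpa using hβ, ?_⟩
  rw [← hA]
  simp

lemma fderiv_legendre_ne_zero (hF : IsMinkowskiNorm F) {v : E} (hv : v ≠ 0) {w : E}
    (hw : w ≠ 0) : fderiv ℝ (legendre F) v w ≠ 0 := by
  obtain ⟨A, hA⟩ := hF.exists_equiv hv
  rw [← hA]
  simpa using hw

/-! ### Comparison of the quotients -/

/-- The bound obtained by testing the covector `g_v(w, ·)` on `w`. -/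
lemma tensor_sq_le (hF : IsMinkowskiNorm F) {v w : E} (hv : v ≠ 0) (hw : w ≠ 0) :
    fundamentalTensor F v w w * fundamentalTensor F v w w
      ≤ dualNorm F (fderiv ℝ (legendre F) v w) ^ 2 * F w ^ 2 := by
  have h := hF.le_dualNorm_mul (hF.fderiv_legendre_ne_zero hv hw) w
  rw [← hF.fundamentalTensor_eq hv] at h
  rw [← mul_pow, ← sq]
  exact pow_le_pow_left₀ (hF.fundamentalTensor_self_nonneg hv w) h 2

end FiniteDimensional

end IsMinkowskiNorm

/-! ### The dual expressions -/

/-- **Dual expressions for the uniform smoothness and convexity constants**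
(Section 2.1 of the paper):
`sup_{v,w ≠ 0} g_v(w,w)/F(w)² = sup_{α,β ≠ 0} F*(β)²/g*_α(β,β)` and
`sup_{v,w ≠ 0} F(w)²/g_v(w,w) = sup_{α,β ≠ 0} g*_α(β,β)/F*(β)²`. -/
theorem uniform_constants_dual_expressions
    {E : Type*} [NormedAddCommGroup E] [NormedSpace ℝ E] [FiniteDimensional ℝ E]
    {F : E → ℝ} (hF : IsMinkowskiNorm F) :
    ((⨆ (v : {v : E // v ≠ 0}) (w : {w : E // w ≠ 0}),
        ENNReal.ofReal (fundamentalTensor F v.1 w.1 w.1 / F w.1 ^ 2)) =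
      ⨆ (α : {α : E →L[ℝ] ℝ // α ≠ 0}) (β : {β : E →L[ℝ] ℝ // β ≠ 0}),
        ENNReal.ofReal ((dualNorm F β.1) ^ 2 /
          fundamentalTensor (fun γ : E →L[ℝ] ℝ => dualNorm F γ) α.1 β.1 β.1)) ∧
    ((⨆ (v : {v : E // v ≠ 0}) (w : {w : E // w ≠ 0}),
        ENNReal.ofReal (F w.1 ^ 2 / fundamentalTensor F v.1 w.1 w.1)) =
      ⨆ (α : {α : E →L[ℝ] ℝ // α ≠ 0}) (β : {β : E →L[ℝ] ℝ // β ≠ 0}),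
        ENNReal.ofReal
          (fundamentalTensor (fun γ : E →L[ℝ] ℝ => dualNorm F γ) α.1 β.1 β.1 /
            (dualNorm F β.1) ^ 2)) := by
  constructor
  · apply le_antisymm
    · refine iSup_le fun ⟨v, hv⟩ => iSup_le fun ⟨w, hw⟩ => ?_
      have hβ := hF.fderiv_legendre_ne_zero hv hw
      refine le_iSup_of_le ⟨legendre F v, hF.legendre_ne_zero hv⟩ (le_iSup_of_le ⟨_, hβ⟩ ?_)
      refine ENNReal.ofReal_le_ofReal ?_
      simp only [hF.fundamentalTensor_dual hv]
      rw [div_le_div_iff₀ (pow_pos (hF.pos w hw) 2) (hF.posdef v hv w hw)]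
      exact hF.tensor_sq_le hv hw
    · refine iSup_le fun ⟨α, hα⟩ => iSup_le fun ⟨β, hβ⟩ => ?_
      obtain ⟨v, hv, rfl⟩ := hF.legendre_surjective hα
      obtain ⟨u, hu, rfl⟩ := hF.legendre_surjective hβ
      obtain ⟨w, hw, hwu⟩ := hF.exists_fderiv_legendre_eq hv hβ
      refine le_iSup_of_le ⟨v, hv⟩ (le_iSup_of_le ⟨u, hu⟩ (ENNReal.ofReal_le_ofReal ?_))
      have h := hF.fundamentalTensor_dual hv w
      rw [hwu] at h
      simp only [h, hF.dualNorm_legendre hu]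
      rw [div_le_div_iff₀ (hF.posdef v hv w hw) (pow_pos (hF.pos u hu) 2)]
      exact hF.pow_four_le hv hu hwu
  · apply le_antisymm
    · refine iSup_le fun ⟨v, hv⟩ => iSup_le fun ⟨u, hu⟩ => ?_
      have hβ := hF.legendre_ne_zero hu
      obtain ⟨w, hw, hwu⟩ := hF.exists_fderiv_legendre_eq hv hβ
      refine le_iSup_of_le ⟨legendre F v, hF.legendre_ne_zero hv⟩ (le_iSup_of_le ⟨_, hβ⟩ ?_)
      refine ENNReal.ofReal_le_ofReal ?_
      have h := hF.fundamentalTensor_dual hv w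
      rw [hwu] at h
      simp only [h, hF.dualNorm_legendre hu]
      rw [div_le_div_iff₀ (hF.posdef v hv u hu) (pow_pos (hF.pos u hu) 2),
        mul_comm (fundamentalTensor F v w w)]
      exact hF.pow_four_le hv hu hwu
    · refine iSup_le fun ⟨α, hα⟩ => iSup_le fun ⟨β, hβ⟩ => ?_
      obtain ⟨v, hv, rfl⟩ := hF.legendre_surjective hα
      obtain ⟨w, hw, rfl⟩ := hF.exists_fderiv_legendre_eq hv hβ
      refine le_iSup_of_le ⟨v, hv⟩ (le_iSup_of_le ⟨w, hw⟩ (ENNReal.ofReal_le_ofReal ?_))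
      simp only [hF.fundamentalTensor_dual hv]
      rw [div_le_div_iff₀ (pow_pos (hF.dualNorm_pos hβ) 2) (hF.posdef v hv w hw),
        mul_comm (F w ^ 2)]
      exact hF.tensor_sq_le hv hw
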